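/- Let S be a numerical semigroup with multiplicity three and let I ∈ 𝔑(S) \ {S}. Then the following are equivalent: (1) I is +-irreducible; (2) I is ∨-irreducible (I cannot be written as a supremum J ∨ K with respect to ⪯ with J, K ∈ 𝔑(S) \ {I}); (3) I is ∪-irreducible (I cannot be written as J ∪ K with J, K ∈ 𝔑(S) \ {I}); (4) I = {0, g} + S for some gap g of S. -/

import Mathlib

open Pointwise

/-- A numerical semigroup: an additive submonoid of `ℕ` with finite complement. -/
def IsNumericalSemigroup (S : Set ℕ) : Prop :=
  0 ∈ S ∧ (∀ a ∈ S, ∀ b ∈ S, a + b ∈ S) ∧ Sᶜ.Finite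

/-- A normalized (relative) ideal of `S`: a subset of `ℕ` with `min I = 0`
(equivalently `0 ∈ I`) satisfying `I + S ⊆ I`. -/
def IsNormalizedIdeal (S I : Set ℕ) : Prop :=
  0 ∈ I ∧ ∀ i ∈ I, ∀ s ∈ S, i + s ∈ I

/-- The set `𝔑(S)` of normalized ideals of `S`. -/
def NI (S : Set ℕ) : Set (Set ℕ) := {I : Set ℕ | IsNormalizedIdeal S I}

/-- The multiplicity of `S`: its least nonzero element. -/
noncomputable def multNS (S : Set ℕ) : ℕ := sInf {n : ℕ | n ∈ S ∧ n ≠ 0}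

/-- The Frobenius number of `S` (or of an ideal): the largest natural number not in `S`. -/
noncomputable def frobNS (S : Set ℕ) : ℕ := sSup Sᶜ

/-- A minimal generator of `S`: a nonzero element of `S` that is not the sum
of two nonzero elements of `S`. -/
def IsMinimalGenerator (S : Set ℕ) (a : ℕ) : Prop :=
  a ∈ S ∧ a ≠ 0 ∧ ¬ ∃ b ∈ S, ∃ c ∈ S, b ≠ 0 ∧ c ≠ 0 ∧ a = b + c

/-- A minimal generator of an ideal `I` of a numerical semigroup `T`:
an element `x ∈ I` with `x ≠ y + t` for every `y ∈ I` and nonzero `t ∈ T`. -/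
def IsMinGenOfIdeal (T I : Set ℕ) (x : ℕ) : Prop :=
  x ∈ I ∧ ∀ y ∈ I, ∀ t ∈ T, t ≠ 0 → x ≠ y + t

/-- The order `⪯` on normalized ideals: `I ⪯ J` iff `I + K = J` for some `K ∈ 𝔑(S)`. -/
def Preceq (S I J : Set ℕ) : Prop :=
  ∃ K : Set ℕ, IsNormalizedIdeal S K ∧ I + K = J

/-- `M` is the supremum of `{I, J}` in `(𝔑(S), ⪯)`. -/
def IsSupNI (S I J M : Set ℕ) : Prop :=
  IsNormalizedIdeal S M ∧ Preceq S I M ∧ Preceq S J M ∧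
    ∀ L : Set ℕ, IsNormalizedIdeal S L → Preceq S I L → Preceq S J L → Preceq S M L

/-- `M` is the infimum of `{I, J}` in `(𝔑(S), ⪯)`. -/
def IsInfNI (S I J M : Set ℕ) : Prop :=
  IsNormalizedIdeal S M ∧ Preceq S M I ∧ Preceq S M J ∧
    ∀ L : Set ℕ, IsNormalizedIdeal S L → Preceq S L I → Preceq S L J → Preceq S L M

/-- `(𝔑(S), ⪯)` is a lattice: every pair of normalized ideals has a supremum
and an infimum with respect to `⪯`. -/
def NILattice (S : Set ℕ) : Prop :=
  ∀ I J : Set ℕ, IsNormalizedIdeal S I → IsNormalizedIdeal S J →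
    (∃ M : Set ℕ, IsSupNI S I J M) ∧ (∃ M : Set ℕ, IsInfNI S I J M)

/-- The ordinary numerical semigroup `H_m = {0} ∪ {n : n ≥ m}`. -/
def ordinaryNS (m : ℕ) : Set ℕ := {0} ∪ {n : ℕ | m ≤ n}

/-- `I ∈ 𝔑(S) \ {S}` is `+`-irreducible if `I = J + K` with `J, K ∈ 𝔑(S)`
implies `I = J` or `I = K`. -/
def PlusIrreducible (S I : Set ℕ) : Prop :=
  IsNormalizedIdeal S I ∧ I ≠ S ∧
    ∀ J K : Set ℕ, IsNormalizedIdeal S J → IsNormalizedIdeal S K → I = J + K → I = J ∨ I = K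

/-!
For an arbitrary submonoid `S` of `ℕ` and a gap `g` of `S`, the ideal `{0, g} + S` is
`+`-irreducible, and every `+`-irreducible ideal is `∨`-irreducible. The `∪`-irreducible ideals
`I ≠ S` are exactly the `{0, g} + S`: if `g` is the least element of `I \ S`, then `I \ {g}` is
again an ideal and `I = ({0, g} + S) ∪ (I \ {g})`.

When `3 ∈ S`, an ideal which is neither `S` nor some `{0, g} + S` is the union of two ideals
`{0, g} + S` and `{0, h} + S`, where `g` and `h` lie in the two nonzero residue classes modulo `3`.
Such a union is the supremum of its two parts, so the ideal is not `∨`-irreducible.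
-/

/-- `∨`-irreducibility of `I`: it is not the supremum, for `⪯`, of two normalized ideals different
from `I`. The ideal `S` itself is not excluded. -/
def SupIrreducible (S I : Set ℕ) : Prop :=
  ¬ ∃ J K : Set ℕ, IsNormalizedIdeal S J ∧ IsNormalizedIdeal S K ∧ J ≠ I ∧ K ≠ I ∧ IsSupNI S J K I

/-- `∪`-irreducibility of `I`: it is not the union of two normalized ideals different from `I`.
The ideal `S` itself is not excluded. -/
def UnionIrreducible (S I : Set ℕ) : Prop :=
  ¬ ∃ J K : Set ℕ, IsNormalizedIdeal S J ∧ IsNormalizedIdeal S K ∧ J ≠ I ∧ K ≠ I ∧ I = J ∪ K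

/-- The ideal `{0, g} + S` generated by `0` and `g`. -/
def pairIdeal (S : Set ℕ) (g : ℕ) : Set ℕ := {0, g} + S

/-- A numerical semigroup as a bundled submonoid of `ℕ`, forgetting that its complement is
finite. -/
def IsNumericalSemigroup.toAddSubmonoid {S : Set ℕ} (hS : IsNumericalSemigroup S) :
    AddSubmonoid ℕ where
  carrier := S
  zero_mem' := hS.1
  add_mem' ha hb := hS.2.1 _ ha _ hb

theorem multNS_mem {S : Set ℕ} (h : multNS S ≠ 0) : multNS S ∈ S :=
  (Nat.sInf_mem (Nat.nonempty_of_pos_sInf (Nat.pos_of_ne_zero h))).1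

theorem exists_isLeast_sdiff {I J : Set ℕ} (hJI : J ⊆ I) (hne : I ≠ J) :
    ∃ g, IsLeast (I \ J) g :=
  have hnonempty : (I \ J).Nonempty := Set.sdiff_nonempty.2 fun hIJ => hne (hIJ.antisymm hJI)
  ⟨sInf (I \ J), Nat.sInf_mem hnonempty, fun _ => Nat.sInf_le⟩

section NormalizedIdeal

variable {S I J K L : Set ℕ}

theorem IsNormalizedIdeal.subset (hI : IsNormalizedIdeal S I) : S ⊆ I := fun s hs => by
  simpa using hI.2 0 hI.1 s hs

theorem IsNormalizedIdeal.add (hJ : IsNormalizedIdeal S J) (hK : IsNormalizedIdeal S K) :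
    IsNormalizedIdeal S (J + K) := by
  refine ⟨⟨0, hJ.1, 0, hK.1, rfl⟩, ?_⟩
  rintro _ ⟨j, hj, k, hk, rfl⟩ s hs
  exact ⟨j, hj, k + s, hK.2 k hk s hs, (add_assoc j k s).symm⟩

theorem IsNormalizedIdeal.union (hJ : IsNormalizedIdeal S J) (hK : IsNormalizedIdeal S K) :
    IsNormalizedIdeal S (J ∪ K) :=
  ⟨Or.inl hJ.1, fun i hi s hs => hi.imp (hJ.2 i · s hs) (hK.2 i · s hs)⟩

theorem Preceq.subset (h : Preceq S I J) : I ⊆ J := by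
  obtain ⟨K, hK, rfl⟩ := h
  exact Set.subset_add_left I hK.1

-- The witness for `⪯` is the colon ideal, the largest `K` with `I + K ⊆ L`.
theorem preceq_of_forall_mem_or_add_mem (hI : 0 ∈ I) (hL : IsNormalizedIdeal S L) (hIL : I ⊆ L)
    (h : ∀ n ∈ L, n ∈ I ∨ ∀ i ∈ I, i + n ∈ L) : Preceq S I L := by
  have hcolon : IsNormalizedIdeal S {c | ∀ i ∈ I, i + c ∈ L} :=
    ⟨fun i hi => hIL hi, fun c hc s hs i hi => by
      simpa only [add_assoc] using hL.2 (i + c) (hc i hi) s hs⟩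
  refine ⟨_, hcolon, Set.Subset.antisymm ?_ fun n hn => ?_⟩
  · rintro _ ⟨i, hi, c, hc, rfl⟩
    exact hc i hi
  · rcases h n hn with hnI | hnc
    · exact Set.subset_add_left I hcolon.1 hnI
    · exact Set.subset_add_right _ hI hnc

theorem PlusIrreducible.supIrreducible (hI : PlusIrreducible S I) : SupIrreducible S I := by
  rintro ⟨J, K, hJ, hK, hJI, hKI, -, ⟨A, hA, hJA⟩, hKle, hleast⟩
  have hIA : I = A := (hI.2.2 J A hJ hA hJA.symm).resolve_left hJI.symm
  have hsum_le : J + K ⊆ I := by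
    calc J + K ⊆ J + I := Set.add_subset_add_left hKle.subset
      _ = I := by rw [hIA, hJA, hIA]
  have hle_sum : I ⊆ J + K :=
    (hleast (J + K) (hJ.add hK) ⟨K, hK, rfl⟩ ⟨J, hJ, add_comm K J⟩).subset
  rcases hI.2.2 J K hJ hK (hle_sum.antisymm hsum_le) with h | h
  · exact hJI h.symm
  · exact hKI h.symm

end NormalizedIdeal

section PairIdeal

variable {S I : Set ℕ} {g n : ℕ}

theorem mem_pairIdeal : n ∈ pairIdeal S g ↔ n ∈ S ∨ ∃ s ∈ S, g + s = n := by
  simp [pairIdeal, Set.mem_add]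

theorem subset_pairIdeal : S ⊆ pairIdeal S g := fun _ hs => mem_pairIdeal.2 (Or.inl hs)

theorem IsNormalizedIdeal.pairIdeal_subset (hI : IsNormalizedIdeal S I) (hg : g ∈ I) :
    pairIdeal S g ⊆ I := by
  intro n hn
  rcases mem_pairIdeal.1 hn with hn | ⟨s, hs, rfl⟩
  · exact hI.subset hn
  · exact hI.2 g hg s hs

theorem IsNormalizedIdeal.add_mem_of_mem_pairIdeal (hI : IsNormalizedIdeal S I) (hn : n ∈ I)
    (hgn : g + n ∈ I) {i : ℕ} (hi : i ∈ pairIdeal S g) : i + n ∈ I := by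
  rcases mem_pairIdeal.1 hi with hi | ⟨s, hs, rfl⟩
  · simpa only [add_comm] using hI.2 n hn i hi
  · simpa only [add_right_comm] using hI.2 (g + n) hgn s hs

end PairIdeal

section Submonoid

variable {S : AddSubmonoid ℕ} {I : Set ℕ} {g h : ℕ}

theorem self_mem_pairIdeal : g ∈ pairIdeal S g := mem_pairIdeal.2 (Or.inr ⟨0, S.zero_mem, rfl⟩)

theorem isNormalizedIdeal_pairIdeal : IsNormalizedIdeal S (pairIdeal S g) := by
  refine ⟨subset_pairIdeal S.zero_mem, fun i hi s hs => mem_pairIdeal.2 ?_⟩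
  rcases mem_pairIdeal.1 hi with hi | ⟨t, ht, rfl⟩
  · exact Or.inl (S.add_mem hi hs)
  · exact Or.inr ⟨t + s, S.add_mem ht hs, (add_assoc g t s).symm⟩

theorem pairIdeal_ne (hg : g ∉ S) : pairIdeal S g ≠ S := fun h => hg (h.subset self_mem_pairIdeal)

theorem plusIrreducible_pairIdeal (hg : g ∉ S) : PlusIrreducible S (pairIdeal S g) := by
  refine ⟨isNormalizedIdeal_pairIdeal, pairIdeal_ne hg, fun J K hJ hK hsum => ?_⟩
  have hJ_le : J ⊆ pairIdeal S g := hsum ▸ Set.subset_add_left J hK.1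
  have hK_le : K ⊆ pairIdeal S g := hsum ▸ Set.subset_add_right K hJ.1
  obtain ⟨j, hj, k, hk, hjk : j + k = g⟩ : g ∈ J + K := hsum ▸ self_mem_pairIdeal
  rcases mem_pairIdeal.1 (hJ_le hj) with hjS | ⟨s, -, hs⟩
  · have hgK : g ∈ K := by simpa only [← hjk, add_comm] using hK.2 k hk j hjS
    exact Or.inr ((hK.pairIdeal_subset hgK).antisymm hK_le)
  · have hgJ : g ∈ J := by rwa [show g = j by omega]
    exact Or.inl ((hJ.pairIdeal_subset hgJ).antisymm hJ_le)

theorem unionIrreducible_pairIdeal : UnionIrreducible S (pairIdeal S g) := by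
  rintro ⟨J, K, hJ, hK, hJne, hKne, hunion⟩
  rcases hunion.subset self_mem_pairIdeal with hg | hg
  · exact hJne ((hunion ▸ Set.subset_union_left).antisymm (hJ.pairIdeal_subset hg))
  · exact hKne ((hunion ▸ Set.subset_union_right).antisymm (hK.pairIdeal_subset hg))

theorem IsNormalizedIdeal.sdiff_singleton (hI : IsNormalizedIdeal S I) (hg : IsLeast (I \ S) g) :
    IsNormalizedIdeal S (I \ {g}) := by
  refine ⟨⟨hI.1, fun h0 => hg.1.2 (h0 ▸ S.zero_mem)⟩, ?_⟩
  rintro i ⟨hi, hig : i ≠ g⟩ s hs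
  refine ⟨hI.2 i hi s hs, fun his : i + s = g => ?_⟩
  have hiS : i ∉ S := fun hiS => hg.1.2 (his ▸ S.add_mem hiS hs)
  have hgi : g ≤ i := hg.2 ⟨hi, hiS⟩
  omega

theorem unionIrreducible_iff_exists_eq_pairIdeal (hI : IsNormalizedIdeal S I) (hne : I ≠ S) :
    UnionIrreducible S I ↔ ∃ g, g ∉ S ∧ I = pairIdeal S g := by
  refine ⟨fun hirr => ?_, fun ⟨_, _, hIg⟩ => hIg ▸ unionIrreducible_pairIdeal⟩
  obtain ⟨g, hg⟩ := exists_isLeast_sdiff hI.subset hne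
  have hpair_le : pairIdeal S g ⊆ I := hI.pairIdeal_subset hg.1.1
  have hunion : I = pairIdeal S g ∪ I \ {g} := by
    refine Set.Subset.antisymm (fun n hn => ?_) (Set.union_subset hpair_le Set.sdiff_subset)
    by_cases hng : n = g
    · exact Or.inl (hng ▸ self_mem_pairIdeal)
    · exact Or.inr ⟨hn, hng⟩
  by_contra! hpair
  exact hirr ⟨pairIdeal S g, I \ {g}, isNormalizedIdeal_pairIdeal, hI.sdiff_singleton hg,
    (hpair g hg.1.2).symm, fun h => (h.symm.subset hg.1.1).2 rfl, hunion⟩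

theorem add_mem_of_pairIdeal_preceq {n : ℕ} (hgI : Preceq S (pairIdeal S g) I) (hn : n ∈ I)
    (hng : n < g) : g + n ∈ I := by
  obtain ⟨A, hA, rfl⟩ := hgI
  obtain ⟨i, hi, a, ha, hia : i + a = n⟩ := hn
  rcases mem_pairIdeal.1 hi with hiS | ⟨s, -, hsi⟩
  · have hnA : n ∈ A := by simpa only [← hia, add_comm] using hA.2 a ha i hiS
    exact Set.add_mem_add self_mem_pairIdeal hnA
  · omega

theorem pairIdeal_preceq_union (hgh : g + h ∈ S) :
    Preceq S (pairIdeal S g) (pairIdeal S g ∪ pairIdeal S h) := by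
  have hideal : IsNormalizedIdeal S (pairIdeal S g ∪ pairIdeal S h) :=
    isNormalizedIdeal_pairIdeal.union isNormalizedIdeal_pairIdeal
  refine preceq_of_forall_mem_or_add_mem (subset_pairIdeal S.zero_mem) hideal
    Set.subset_union_left fun n hn => ?_
  rcases hn with hn | hn
  · exact Or.inl hn
  rcases mem_pairIdeal.1 hn with hnS | ⟨s, hs, rfl⟩
  · exact Or.inl (subset_pairIdeal hnS)
  · have hsum : g + (h + s) ∈ S := by simpa only [add_assoc] using S.add_mem hgh hs
    exact Or.inr fun i hi => hideal.add_mem_of_mem_pairIdeal (Or.inr hn) (hideal.subset hsum) hi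

theorem mem_of_dvd {m n : ℕ} (hm : m ∈ S) (hmn : m ∣ n) : n ∈ S := by
  obtain ⟨k, rfl⟩ := hmn
  simpa only [smul_eq_mul, mul_comm] using S.nsmul_mem hm k

theorem mem_pairIdeal_of_modEq {m n : ℕ} (hm : m ∈ S) (hgn : g ≤ n) (hmod : g ≡ n [MOD m]) :
    n ∈ pairIdeal S g :=
  mem_pairIdeal.2 (Or.inr ⟨n - g, mem_of_dvd hm ((Nat.modEq_iff_dvd' hgn).1 hmod),
    Nat.add_sub_cancel' hgn⟩)

end Submonoid

section ThreeMem

variable {S : AddSubmonoid ℕ} {I L : Set ℕ} {g h : ℕ}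

theorem modEq_three_or_modEq_three_of_notMem {n : ℕ} (h3 : 3 ∈ S) (hg : g ∉ S)
    (hgh : 3 ∣ g + h) (hn : n ∉ S) : g ≡ n [MOD 3] ∨ h ≡ n [MOD 3] := by
  have hg_dvd : ¬ 3 ∣ g := fun hd => hg (mem_of_dvd h3 hd)
  have hn_dvd : ¬ 3 ∣ n := fun hd => hn (mem_of_dvd h3 hd)
  unfold Nat.ModEq
  omega

theorem mem_pairIdeal_or_add_mem {n : ℕ} (h3 : 3 ∈ S) (hgh : 3 ∣ g + h)
    (hL : IsNormalizedIdeal S L) (hgL : Preceq S (pairIdeal S g) L) (hn : n ∈ L)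
    (hmod : g ≡ n [MOD 3]) :
    n ∈ pairIdeal S g ∨ g + n ∈ L ∧ h + n ∈ L := by
  rcases le_or_gt g n with hle | hlt
  · exact Or.inl (mem_pairIdeal_of_modEq h3 hle hmod)
  · have hdvd : 3 ∣ h + n := by
      unfold Nat.ModEq at hmod
      omega
    exact Or.inr ⟨add_mem_of_pairIdeal_preceq hgL hn hlt,
      hL.subset (mem_of_dvd h3 hdvd)⟩

theorem pairIdeal_union_preceq (h3 : 3 ∈ S) (hg : g ∉ S) (hgh : 3 ∣ g + h)
    (hL : IsNormalizedIdeal S L) (hgL : Preceq S (pairIdeal S g) L)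
    (hhL : Preceq S (pairIdeal S h) L) : Preceq S (pairIdeal S g ∪ pairIdeal S h) L := by
  refine preceq_of_forall_mem_or_add_mem (Or.inl (subset_pairIdeal S.zero_mem)) hL
    (Set.union_subset hgL.subset hhL.subset) fun n hn => ?_
  have hcolon (hgn : g + n ∈ L) (hhn : h + n ∈ L) :
      ∀ i ∈ pairIdeal S g ∪ pairIdeal S h, i + n ∈ L := fun i hi =>
    hi.elim (hL.add_mem_of_mem_pairIdeal hn hgn) (hL.add_mem_of_mem_pairIdeal hn hhn)
  by_cases hnS : n ∈ S
  · exact Or.inl (Or.inl (subset_pairIdeal hnS))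
  rcases modEq_three_or_modEq_three_of_notMem h3 hg hgh hnS with hmod | hmod
  · exact (mem_pairIdeal_or_add_mem h3 hgh hL hgL hn hmod).imp Or.inl
      fun ⟨hgn, hhn⟩ => hcolon hgn hhn
  · exact (mem_pairIdeal_or_add_mem h3 (add_comm g h ▸ hgh) hL hhL hn hmod).imp Or.inr
      fun ⟨hhn, hgn⟩ => hcolon hgn hhn

theorem isSupNI_pairIdeal_union (h3 : 3 ∈ S) (hg : g ∉ S) (hgh : 3 ∣ g + h) :
    IsSupNI S (pairIdeal S g) (pairIdeal S h) (pairIdeal S g ∪ pairIdeal S h) := by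
  have hsum : g + h ∈ S := mem_of_dvd h3 hgh
  refine ⟨isNormalizedIdeal_pairIdeal.union isNormalizedIdeal_pairIdeal,
    pairIdeal_preceq_union hsum, ?_, fun L => pairIdeal_union_preceq h3 hg hgh⟩
  rw [Set.union_comm]
  exact pairIdeal_preceq_union (add_comm g h ▸ hsum)

theorem exists_eq_pairIdeal_union (h3 : 3 ∈ S) (hI : IsNormalizedIdeal S I) (hne : I ≠ S)
    (hpair : ∀ g, g ∉ S → I ≠ pairIdeal S g) :
    ∃ g h, g ∉ S ∧ h ∉ S ∧ 3 ∣ g + h ∧ I = pairIdeal S g ∪ pairIdeal S h := by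
  obtain ⟨g, ⟨hgI, hgS⟩, hg_min⟩ := exists_isLeast_sdiff hI.subset hne
  obtain ⟨h, ⟨hhI, hh_pair⟩, hh_min⟩ :=
    exists_isLeast_sdiff (hI.pairIdeal_subset hgI) (hpair g hgS)
  have hhS : h ∉ S := fun hhS => hh_pair (subset_pairIdeal hhS)
  have hgh : 3 ∣ g + h := by
    have hg_dvd : ¬ 3 ∣ g := fun hd => hgS (mem_of_dvd h3 hd)
    have hh_dvd : ¬ 3 ∣ h := fun hd => hhS (mem_of_dvd h3 hd)
    have hmod : ¬ g % 3 = h % 3 := fun hmod =>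
      hh_pair (mem_pairIdeal_of_modEq h3 (hg_min ⟨hhI, hhS⟩) hmod)
    omega
  refine ⟨g, h, hgS, hhS, hgh, Set.Subset.antisymm (fun n hn => ?_)
    (Set.union_subset (hI.pairIdeal_subset hgI) (hI.pairIdeal_subset hhI))⟩
  by_cases hn_pair : n ∈ pairIdeal S g
  · exact Or.inl hn_pair
  have hnS : n ∉ S := fun hnS => hn_pair (subset_pairIdeal hnS)
  rcases modEq_three_or_modEq_three_of_notMem h3 hgS hgh hnS with hmod | hmod
  · exact absurd (mem_pairIdeal_of_modEq h3 (hg_min ⟨hn, hnS⟩) hmod) hn_pair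
  · exact Or.inr (mem_pairIdeal_of_modEq h3 (hh_min ⟨hn, hn_pair⟩) hmod)

theorem SupIrreducible.exists_eq_pairIdeal (hirr : SupIrreducible S I) (h3 : 3 ∈ S)
    (hI : IsNormalizedIdeal S I) (hne : I ≠ S) : ∃ g, g ∉ S ∧ I = pairIdeal S g := by
  by_contra! hpair
  obtain ⟨g, h, hg, hh, hgh, hunion⟩ := exists_eq_pairIdeal_union h3 hI hne hpair
  exact hirr ⟨pairIdeal S g, pairIdeal S h, isNormalizedIdeal_pairIdeal,
    isNormalizedIdeal_pairIdeal, (hpair g hg).symm, (hpair h hh).symm,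
    hunion ▸ isSupNI_pairIdeal_union h3 hg hgh⟩

theorem irreducibles_coincide_mult_three_general (S : AddSubmonoid ℕ) (h3 : 3 ∈ S) {I : Set ℕ}
    (hI : IsNormalizedIdeal S I) (hne : I ≠ S) :
    (PlusIrreducible S I ↔ ∃ g, g ∉ S ∧ I = pairIdeal S g) ∧
    (SupIrreducible S I ↔ ∃ g, g ∉ S ∧ I = pairIdeal S g) ∧
    (UnionIrreducible S I ↔ ∃ g, g ∉ S ∧ I = pairIdeal S g) := by
  have plus_of_pair : (∃ g, g ∉ S ∧ I = pairIdeal S g) → PlusIrreducible S I :=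
    fun ⟨g, hg, hIg⟩ => hIg ▸ plusIrreducible_pairIdeal hg
  have pair_of_sup : SupIrreducible S I → ∃ g, g ∉ S ∧ I = pairIdeal S g :=
    fun h => h.exists_eq_pairIdeal h3 hI hne
  exact ⟨⟨fun h => pair_of_sup h.supIrreducible, plus_of_pair⟩,
    ⟨pair_of_sup, fun h => (plus_of_pair h).supIrreducible⟩,
    unionIrreducible_iff_exists_eq_pairIdeal hI hne⟩

end ThreeMem

/-- Proposition: for `S` of multiplicity three and
`I ∈ 𝔑(S) \ {S}`, the conditions `+`-irreducible, `∨`-irreducible,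
`∪`-irreducible, and `I = {0, g} + S` for a gap `g` of `S` are all equivalent. -/
theorem irreducibles_coincide_mult_three (S : Set ℕ) (hS : IsNumericalSemigroup S)
    (hm : multNS S = 3) (I : Set ℕ) (hI : IsNormalizedIdeal S I) (hne : I ≠ S) :
    (PlusIrreducible S I ↔ ∃ g : ℕ, g ∉ S ∧ I = ({0, g} : Set ℕ) + S) ∧
    ((¬ ∃ J K : Set ℕ, IsNormalizedIdeal S J ∧ IsNormalizedIdeal S K ∧
        J ≠ I ∧ K ≠ I ∧ IsSupNI S J K I) ↔
      ∃ g : ℕ, g ∉ S ∧ I = ({0, g} : Set ℕ) + S) ∧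
    ((¬ ∃ J K : Set ℕ, IsNormalizedIdeal S J ∧ IsNormalizedIdeal S K ∧
        J ≠ I ∧ K ≠ I ∧ I = J ∪ K) ↔
      ∃ g : ℕ, g ∉ S ∧ I = ({0, g} : Set ℕ) + S) :=
  irreducibles_coincide_mult_three_general hS.toAddSubmonoid
    (hm ▸ multNS_mem (by simp [hm]) : 3 ∈ S) hI hne
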